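/- Let Λ = ω₁ℤ + ω₂ℤ with ω₁ > 0 real, Im ω₂ > 0, and ω₁·Im ω₂ = π/2, and let π_α be the monic first degree pseudopolynomial with root α. Then for j = 1, 2, all α ∈ ℂ and all z ∈ ℂ: (i) π_{α+ω_j}(z) = −e^{2i·Im(ω̄_j α)} π_α(z), and (ii) π_α(z+ω_j) = −e^{2i·Im(ω̄_j(z−2α))} π_α(z). -/

import Mathlib

open MeasureTheory

/-- The lattice `Λ = ω₁ℤ + ω₂ℤ` as a subset of `ℂ`. -/
def latticeSet (ω₁ ω₂ : ℂ) : Set ℂ :=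
  {w : ℂ | ∃ m n : ℤ, w = (m : ℂ) * ω₁ + (n : ℂ) * ω₂}

/-- The Weierstrass sigma function of the lattice `ω₁ℤ + ω₂ℤ`. -/
noncomputable def wSigma (ω₁ ω₂ : ℂ) (z : ℂ) : ℂ :=
  z * ∏' p : {p : ℤ × ℤ // p ≠ 0},
      (1 - z / ((p.1.1 : ℂ) * ω₁ + (p.1.2 : ℂ) * ω₂)) *
        Complex.exp (z / ((p.1.1 : ℂ) * ω₁ + (p.1.2 : ℂ) * ω₂) +
          z ^ 2 / (2 * ((p.1.1 : ℂ) * ω₁ + (p.1.2 : ℂ) * ω₂) ^ 2))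

/-- The Weierstrass zeta function `ζ = σ'/σ`. -/
noncomputable def wZeta (ω₁ ω₂ : ℂ) (z : ℂ) : ℂ :=
  deriv (wSigma ω₁ ω₂) z / wSigma ω₁ ω₂ z

/-- The quasi-period `λ₁ = 2ζ(ω₁/2)`. -/
noncomputable def lambda1 (ω₁ ω₂ : ℂ) : ℂ := 2 * wZeta ω₁ ω₂ (ω₁ / 2)

/-- The constant `b = 1 − λ₁/(2ω₁)`. -/
noncomputable def bconst (ω₁ ω₂ : ℂ) : ℂ := 1 - lambda1 ω₁ ω₂ / (2 * ω₁)

/-- The modified Weierstrass sigma function `σ_*(z) = e^{b z²} σ(z)`. -/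
noncomputable def sigmaStar (ω₁ ω₂ : ℂ) (z : ℂ) : ℂ :=
  Complex.exp (bconst ω₁ ω₂ * z ^ 2) * wSigma ω₁ ω₂ z

/-- A fundamental domain of the lattice `ω₁ℤ + ω₂ℤ`. -/
def fundDomain (ω₁ ω₂ : ℂ) : Set ℂ :=
  (fun p : ℝ × ℝ => (p.1 : ℂ) * ω₁ + (p.2 : ℂ) * ω₂) ''
    (Set.Ico (0 : ℝ) 1 ×ˢ Set.Ico (0 : ℝ) 1)

/-- The normalizing constant `A_Λ`. -/
noncomputable def Aconst (ω₁ ω₂ : ℂ) : ℝ :=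
  2 / Real.pi * ∫ z in fundDomain ω₁ ω₂, (Real.log ‖sigmaStar ω₁ ω₂ z‖ - ‖z‖ ^ 2)

/-- The unipolar Green function of the torus `ℂ/Λ`. -/
noncomputable def Utorus (ω₁ ω₂ : ℂ) (z w : ℂ) : ℝ :=
  Real.log ‖sigmaStar ω₁ ω₂ (z - w)‖ - ‖z - w‖ ^ 2 - Aconst ω₁ ω₂

/-- The monic first degree pseudopolynomial on the torus with root `α`. -/
noncomputable def pseudoPoly (ω₁ ω₂ : ℂ) (α z : ℂ) : ℂ :=
  Complex.exp (2 * Complex.I * ((((starRingEnd ℂ) α) * z).im : ℂ)) *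
    (Complex.exp (-((‖z - α‖ ^ 2 : ℝ) : ℂ)) * sigmaStar ω₁ ω₂ (z - α))

/-!
Termwise logarithmic differentiation of the sigma product gives `ζ' = -℘`, so periodicity of `℘`
makes `ζ(z + ω) - ζ(z)` a constant `η(ω)`, additive in `ω`. Hence `σ(z + ω)` and
`exp (η(ω) (z + ω / 2)) σ(z)` have the same logarithmic derivative; as `σ` is odd, comparing them at
`z = -ω / 2` shows that their ratio is `-1` whenever `ω / 2` is not a lattice point.

Integrating `ζ` around a period parallelogram centred at the pole `0` yields the Legendre relation
`η(ω₁) ω₂ - η(ω₂) ω₁ = 2πi`. With `ω₁` real and covolume `π / 2` it says exactly that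
`η(ω) + 2 b ω = 2 ω̄` on the whole lattice. Under `z ↦ z + ω` the function `σ_*` is therefore
multiplied by the same factor as `exp (|z|²)`, up to a unimodular one.
-/

section CanonicalProduct

open Complex Filter Topology

/-- The Weierstrass primary factor `Eₙ(w) = (1 - w) exp (∑_{k=1}^n w^k / k)`. Its exponent is
encoded as minus a Taylor polynomial of the logarithm, so that `Eₙ(w)` is the exponential of the
Taylor remainder of `log (1 - w)`. -/
noncomputable def primaryFactor (n : ℕ) (w : ℂ) : ℂ :=
  (1 - w) * exp (-logTaylor (n + 1) (-w))

/-- The canonical product `∏ᵢ Eₙ(z / aᵢ)` with zeros `aᵢ`. An index with `aᵢ = 0` contributes the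
factor `Eₙ(0) = 1`, because `z / 0 = 0`. -/
noncomputable def canonicalProduct {ι : Type*} (n : ℕ) (a : ι → ℂ) (z : ℂ) : ℂ :=
  ∏' i, primaryFactor n (z / a i)

lemma primaryFactor_zero (n : ℕ) : primaryFactor n 0 = 1 := by
  simp [primaryFactor, logTaylor, Finset.sum_range_succ']

lemma primaryFactor_ne_zero_iff {n : ℕ} {w : ℂ} : primaryFactor n w ≠ 0 ↔ w ≠ 1 := by
  rw [primaryFactor, mul_ne_zero_iff, sub_ne_zero, and_iff_left (exp_ne_zero _), ne_comm]

lemma hasDerivAt_primaryFactor (n : ℕ) (w : ℂ) :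
    HasDerivAt (primaryFactor n) (-w ^ n * exp (-logTaylor (n + 1) (-w))) w := by
  have hexp : HasDerivAt (fun w ↦ exp (-logTaylor (n + 1) (-w)))
      (exp (-logTaylor (n + 1) (-w)) * ∑ j ∈ Finset.range n, w ^ j) w := by
    convert! (((hasDerivAt_logTaylor n (-w)).comp w (hasDerivAt_neg w)).neg).cexp using 2
    simp [← mul_pow]
  convert! ((hasDerivAt_id w).const_sub 1).mul hexp using 1
  rw [id]
  linear_combination -exp (-logTaylor (n + 1) (-w)) * mul_neg_geom_sum w n

lemma differentiable_primaryFactor (n : ℕ) : Differentiable ℂ (primaryFactor n) :=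
  fun w ↦ (hasDerivAt_primaryFactor n w).differentiableAt

lemma logDeriv_primaryFactor (n : ℕ) (w : ℂ) :
    logDeriv (primaryFactor n) w = -w ^ n / (1 - w) := by
  rw [logDeriv_apply, (hasDerivAt_primaryFactor n w).deriv, primaryFactor,
    mul_div_mul_right _ _ (exp_ne_zero _)]

lemma norm_primaryFactor_sub_one_le (n : ℕ) {w : ℂ} (hw : ‖w‖ ≤ 1 / 2) :
    ‖primaryFactor n w - 1‖ ≤ 4 * ‖w‖ ^ (n + 1) := by
  have hw1 : 1 - w ≠ 0 := by
    intro h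
    rw [← sub_eq_zero.mp h] at hw
    norm_num at hw
  set v := log (1 + -w) - logTaylor (n + 1) (-w) with hv
  have hv_le : ‖v‖ ≤ 2 * ‖w‖ ^ (n + 1) := by
    calc ‖v‖ ≤ ‖w‖ ^ (n + 1) * (1 - ‖w‖)⁻¹ / (n + 1) := by
          simpa only [norm_neg] using
            norm_log_sub_logTaylor_le n (z := -w) (by rw [norm_neg]; linarith)
      _ ≤ ‖w‖ ^ (n + 1) * (1 - 1 / 2)⁻¹ / 1 := by
          gcongr
          linarith [n.cast_nonneg (α := ℝ)]
      _ = 2 * ‖w‖ ^ (n + 1) := by ring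
  have hv_le_one : ‖v‖ ≤ 1 := by
    calc ‖v‖ ≤ 2 * ‖w‖ ^ (n + 1) := hv_le
      _ ≤ 2 * ‖w‖ := by
          gcongr
          exact pow_le_of_le_one (norm_nonneg w) (by linarith) n.succ_ne_zero
      _ ≤ 1 := by linarith
  have hfactor : primaryFactor n w = exp v := by
    rw [hv, ← sub_eq_add_neg, sub_eq_add_neg, exp_add, exp_log hw1, primaryFactor]
  calc ‖primaryFactor n w - 1‖ = ‖exp v - 1‖ := by rw [hfactor]
    _ ≤ 2 * ‖v‖ := norm_exp_sub_one_le hv_le_one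
    _ ≤ 4 * ‖w‖ ^ (n + 1) := by linarith

variable {ι : Type*} {n : ℕ} {a : ι → ℂ}

lemma norm_primaryFactor_div_sub_one_le (ha : Summable fun i ↦ ‖a i‖⁻¹ ^ (n + 1)) (r : ℝ) :
    ∀ᶠ i in cofinite, ∀ z : ℂ, ‖z‖ ≤ r →
      ‖primaryFactor n (z / a i) - 1‖ ≤ 4 * r ^ (n + 1) * ‖a i‖⁻¹ ^ (n + 1) := by
  have hsmall : Tendsto (fun i ↦ (r * ‖a i‖⁻¹) ^ (n + 1)) cofinite (𝓝 0) := by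
    simpa only [mul_pow, mul_zero] using ha.tendsto_cofinite_zero.const_mul (r ^ (n + 1))
  filter_upwards [hsmall.eventually_lt_const (show (0 : ℝ) < (1 / 2) ^ (n + 1) by positivity)]
    with i hi z hz
  have hz_div : ‖z / a i‖ ≤ r * ‖a i‖⁻¹ := by
    rw [div_eq_mul_inv, norm_mul, norm_inv]
    gcongr
  have hhalf : r * ‖a i‖⁻¹ ≤ 1 / 2 := (lt_of_pow_lt_pow_left₀ _ (by norm_num) hi).le
  calc ‖primaryFactor n (z / a i) - 1‖ ≤ 4 * ‖z / a i‖ ^ (n + 1) :=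
        norm_primaryFactor_sub_one_le n (hz_div.trans hhalf)
    _ ≤ 4 * (r * ‖a i‖⁻¹) ^ (n + 1) := by gcongr
    _ = 4 * r ^ (n + 1) * ‖a i‖⁻¹ ^ (n + 1) := by ring

lemma hasProdLocallyUniformlyOn_primaryFactor (ha : Summable fun i ↦ ‖a i‖⁻¹ ^ (n + 1)) :
    HasProdLocallyUniformlyOn (fun i z ↦ primaryFactor n (z / a i)) (canonicalProduct n a)
      Set.univ := by
  refine hasProdLocallyUniformlyOn_of_forall_compact isOpen_univ fun K _ hK ↦ ?_
  obtain ⟨r, hr⟩ := hK.isBounded.exists_norm_le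
  have hcts (i : ι) : ContinuousOn (fun z ↦ primaryFactor n (z / a i) - 1) K := by
    have := (differentiable_primaryFactor n).continuous
    fun_prop
  have hbound : ∀ᶠ i in cofinite, ∀ z ∈ K,
      ‖primaryFactor n (z / a i) - 1‖ ≤ 4 * r ^ (n + 1) * ‖a i‖⁻¹ ^ (n + 1) := by
    filter_upwards [norm_primaryFactor_div_sub_one_le ha r] with i hi z hz using hi z (hr z hz)
  have := Summable.hasProdUniformlyOn_one_add hK (ha.mul_left (4 * r ^ (n + 1))) hbound hcts
  simpa only [add_sub_cancel] using! this

lemma differentiable_canonicalProduct (ha : Summable fun i ↦ ‖a i‖⁻¹ ^ (n + 1)) :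
    Differentiable ℂ (canonicalProduct n a) := by
  rw [← differentiableOn_univ]
  refine (hasProdLocallyUniformlyOn_primaryFactor ha).differentiableOn ?_ isOpen_univ
  have := differentiable_primaryFactor n
  exact .of_forall fun s ↦ by fun_prop

lemma canonicalProduct_ne_zero_iff (ha : Summable fun i ↦ ‖a i‖⁻¹ ^ (n + 1)) {z : ℂ} :
    canonicalProduct n a z ≠ 0 ↔ ∀ i, z / a i ≠ 1 := by
  refine ⟨fun h i hi ↦ h (tprod_of_exists_eq_zero ⟨i, ?_⟩), fun hz ↦ ?_⟩
  · exact not_not.mp (mt primaryFactor_ne_zero_iff.mp (not_not.mpr hi))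
  have hsum : Summable fun i ↦ ‖primaryFactor n (z / a i) - 1‖ :=
    .of_norm_bounded_eventually (ha.mul_left (4 * ‖z‖ ^ (n + 1))) <| by
      filter_upwards [norm_primaryFactor_div_sub_one_le ha ‖z‖] with i hi
      simpa only [norm_norm] using hi z le_rfl
  simpa only [canonicalProduct, add_sub_cancel] using
    tprod_one_add_ne_zero_of_summable (f := fun i ↦ primaryFactor n (z / a i) - 1)
      (fun i ↦ by simpa only [add_sub_cancel] using primaryFactor_ne_zero_iff.mpr (hz i)) hsum

lemma deriv_logDeriv_eq {f : ℂ → ℂ} {z : ℂ} (hf : AnalyticAt ℂ f z) (hz : f z ≠ 0) :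
    deriv (logDeriv f) z = (deriv (deriv f) z * f z - deriv f z * deriv f z) / f z ^ 2 :=
  deriv_div hf.deriv.differentiableAt hf.differentiableAt hz

lemma tendsto_deriv_logDeriv {κ : Type*} {l : Filter κ} [l.NeBot]
    {F : κ → ℂ → ℂ} {f : ℂ → ℂ} {U : Set ℂ} (hF : TendstoLocallyUniformlyOn F f l U)
    (hFd : ∀ k, DifferentiableOn ℂ (F k) U) (hU : IsOpen U) {z : ℂ} (hz : z ∈ U) (hfz : f z ≠ 0) :
    Tendsto (fun k ↦ deriv (logDeriv (F k)) z) l (𝓝 (deriv (logDeriv f) z)) := by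
  have hfd : DifferentiableOn ℂ f U := hF.differentiableOn (.of_forall hFd) hU
  have hF' := hF.deriv (.of_forall hFd) hU
  have hF'' := hF'.deriv (.of_forall fun k ↦ (hFd k).deriv hU) hU
  have hlim := (((hF''.tendsto_at hz).mul (hF.tendsto_at hz)).sub
    ((hF'.tendsto_at hz).mul (hF'.tendsto_at hz))).div ((hF.tendsto_at hz).pow 2)
    (pow_ne_zero 2 hfz)
  rw [deriv_logDeriv_eq (hfd.analyticAt (hU.mem_nhds hz)) hfz]
  refine hlim.congr' ?_
  filter_upwards [(hF.tendsto_at hz).eventually_ne hfz] with k hk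
  exact (deriv_logDeriv_eq ((hFd k).analyticAt (hU.mem_nhds hz)) hk).symm

lemma hasSum_deriv_logDeriv_canonicalProduct (ha : Summable fun i ↦ ‖a i‖⁻¹ ^ (n + 1)) {z : ℂ}
    (hz : ∀ i, z / a i ≠ 1) :
    HasSum (fun i ↦ deriv (logDeriv fun w ↦ primaryFactor n (w / a i)) z)
      (deriv (logDeriv (canonicalProduct n a)) z) := by
  have hd := differentiable_primaryFactor n
  have hda (i : ι) : Differentiable ℂ fun w ↦ primaryFactor n (w / a i) := by fun_prop
  have hne (i : ι) : ∀ᶠ w in 𝓝 z, primaryFactor n (w / a i) ≠ 0 :=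
    (hda i).continuous.continuousAt.eventually_ne (primaryFactor_ne_zero_iff.mpr (hz i))
  refine (tendsto_deriv_logDeriv
    (hasProdLocallyUniformlyOn_iff_tendstoLocallyUniformlyOn.mp
      (hasProdLocallyUniformlyOn_primaryFactor ha))
    (fun s ↦ by fun_prop) isOpen_univ (Set.mem_univ z)
    ((canonicalProduct_ne_zero_iff ha).mpr hz)).congr fun s ↦ ?_
  have hfin : logDeriv (fun w ↦ ∏ i ∈ s, primaryFactor n (w / a i)) =ᶠ[𝓝 z]
      fun w ↦ ∑ i ∈ s, logDeriv (fun w ↦ primaryFactor n (w / a i)) w := by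
    filter_upwards [(s.eventually_all).mpr fun i _ ↦ hne i] with w hw
    exact logDeriv_prod hw fun i _ ↦ (hda i).differentiableAt
  rw [hfin.deriv_eq]
  refine deriv_fun_sum fun i _ ↦ ?_
  have hi : AnalyticAt ℂ (fun w ↦ primaryFactor n (w / a i)) z := (hda i).analyticAt z
  exact hi.deriv.differentiableAt.div hi.differentiableAt (hne i).self_of_nhds

end CanonicalProduct

section SigmaZeta

open Complex Filter Topology

variable (L : PeriodPair)

/-- The entire function `σ(z) / z`, i.e. the canonical product over the lattice; the index `0`
contributes the factor `1`. -/
noncomputable def sigmaProduct : ℂ → ℂ :=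
  canonicalProduct 2 ((↑) : L.lattice → ℂ)

lemma summable_norm_inv_pow_three_lattice :
    Summable fun l : L.lattice ↦ ‖(l : ℂ)‖⁻¹ ^ (2 + 1) := by
  simpa using! ZLattice.summable_norm_rpow L.lattice (-3) (by simp; norm_num)

variable {L} in
lemma forall_div_lattice_ne_one_iff {z : ℂ} :
    (∀ l : L.lattice, z / (l : ℂ) ≠ 1) ↔ (z ∈ L.lattice → z = 0) := by
  refine ⟨fun h hz ↦ ?_, fun h l hl ↦ ?_⟩
  · by_contra hz0
    exact h ⟨z, hz⟩ (div_self hz0)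
  · have hz0 : z = 0 := h (eq_of_div_eq_one hl ▸ l.2)
    simp [hz0] at hl

lemma differentiable_sigmaProduct : Differentiable ℂ (sigmaProduct L) :=
  differentiable_canonicalProduct (summable_norm_inv_pow_three_lattice L)

variable {L} in
lemma sigmaProduct_ne_zero_iff {z : ℂ} : sigmaProduct L z ≠ 0 ↔ (z ∈ L.lattice → z = 0) :=
  (canonicalProduct_ne_zero_iff (summable_norm_inv_pow_three_lattice L)).trans
    forall_div_lattice_ne_one_iff

lemma sigmaProduct_neg (z : ℂ) : sigmaProduct L (-z) = sigmaProduct L z := by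
  rw [sigmaProduct, canonicalProduct, canonicalProduct, ← (Equiv.neg L.lattice).tprod_eq]
  simp only [Equiv.neg_apply, NegMemClass.coe_neg, neg_div_neg_eq]

lemma primaryFactor_two (w : ℂ) : primaryFactor 2 w = (1 - w) * exp (w + w ^ 2 / 2) := by
  rw [primaryFactor]
  congr 2
  simp [logTaylor, Finset.sum_range_succ]
  ring

lemma wSigma_eq_mul_sigmaProduct (z : ℂ) : wSigma L.ω₁ L.ω₂ z = z * sigmaProduct L z := by
  rw [wSigma, sigmaProduct, canonicalProduct, ← L.latticeEquivProd.symm.toEquiv.tprod_eq,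
    ← Function.Injective.tprod_eq (Subtype.val_injective (p := fun p : ℤ × ℤ ↦ p ≠ 0))]
  · congr! 3 with p
    simp only [LinearEquiv.coe_toEquiv, L.latticeEquiv_symm_apply, primaryFactor_two, div_pow,
      div_div, mul_comm (2 : ℂ)]
  · intro p hp
    have hp0 : p ≠ 0 := by
      rintro rfl
      simp [primaryFactor_zero] at hp
    exact ⟨⟨p, hp0⟩, rfl⟩

lemma deriv_logDeriv_primaryFactor_two_div (l : ℂ) {z : ℂ} (hz : z / l ≠ 1) :
    deriv (logDeriv fun w ↦ primaryFactor 2 (w / l)) z =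
      -(if l = 0 then 0 else 1 / (z - l) ^ 2 - 1 / l ^ 2) := by
  rcases eq_or_ne l 0 with rfl | hl
  · simp [primaryFactor_zero, logDeriv_const]
  have hzl : z - l ≠ 0 := sub_ne_zero.mpr fun h ↦ hz ((div_eq_one_iff_eq hl).mpr h)
  have hlogDeriv (w : ℂ) (hw : w - l ≠ 0) :
      logDeriv (fun w ↦ primaryFactor 2 (w / l)) w = (w - l)⁻¹ + w / l ^ 2 + 1 / l := by
    have hcomp := logDeriv_comp (x := w) (g := fun w ↦ w / l)
      (differentiable_primaryFactor 2 _) (by fun_prop)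
    have hw' : l - w ≠ 0 := by rwa [← neg_ne_zero, neg_sub]
    simp only [Function.comp_def, logDeriv_primaryFactor, deriv_div_const, deriv_id''] at hcomp
    rw [hcomp]
    field_simp
    ring
  have heq : logDeriv (fun w ↦ primaryFactor 2 (w / l)) =ᶠ[𝓝 z]
      fun w ↦ (w - l)⁻¹ + w / l ^ 2 + 1 / l := by
    filter_upwards [(continuous_sub_right l).continuousAt.eventually_ne hzl] with w hw
      using hlogDeriv w hw
  have hderiv : HasDerivAt (fun w ↦ (w - l)⁻¹ + w / l ^ 2 + 1 / l)
      (-1 / (z - l) ^ 2 + 1 / l ^ 2) z :=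
    ((((hasDerivAt_id z).sub_const l).fun_inv hzl).add
      ((hasDerivAt_id z).div_const (l ^ 2))).add_const (1 / l)
  rw [heq.deriv_eq, hderiv.deriv, if_neg hl]
  ring

variable {L} in
lemma hasDerivAt_logDeriv_sigmaProduct {z : ℂ} (hz : z ∈ L.lattice → z = 0) :
    HasDerivAt (logDeriv (sigmaProduct L)) (-L.weierstrassPExcept 0 z) z := by
  have hz' := forall_div_lattice_ne_one_iff.mpr hz
  have hA : AnalyticAt ℂ (sigmaProduct L) z := (differentiable_sigmaProduct L).analyticAt z
  have hdiff : DifferentiableAt ℂ (logDeriv (sigmaProduct L)) z :=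
    hA.deriv.differentiableAt.div hA.differentiableAt (sigmaProduct_ne_zero_iff.mpr hz)
  have hsum := hasSum_deriv_logDeriv_canonicalProduct (summable_norm_inv_pow_three_lattice L)
    hz'
  simp only [deriv_logDeriv_primaryFactor_two_div _ (hz' _)] at hsum
  rw [← hsum.unique (L.hasSum_weierstrassPExcept 0 z).neg]
  exact hdiff.hasDerivAt

lemma differentiable_wSigma : Differentiable ℂ (wSigma L.ω₁ L.ω₂) := by
  rw [funext (wSigma_eq_mul_sigmaProduct L)]
  exact differentiable_id.mul (differentiable_sigmaProduct L)

lemma wSigma_neg (z : ℂ) : wSigma L.ω₁ L.ω₂ (-z) = -wSigma L.ω₁ L.ω₂ z := by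
  simp only [wSigma_eq_mul_sigmaProduct, sigmaProduct_neg, neg_mul]

variable {L} in
lemma wSigma_eq_zero_iff {z : ℂ} : wSigma L.ω₁ L.ω₂ z = 0 ↔ z ∈ L.lattice := by
  rw [wSigma_eq_mul_sigmaProduct, mul_eq_zero, ← not_ne_iff (a := sigmaProduct L z),
    sigmaProduct_ne_zero_iff]
  rcases eq_or_ne z 0 with rfl | hz0
  · simp only [true_or, L.lattice.zero_mem]
  · simp only [hz0, false_or, imp_false, not_not]

lemma wZeta_eq_logDeriv (ω₁ ω₂ : ℂ) : wZeta ω₁ ω₂ = logDeriv (wSigma ω₁ ω₂) := rfl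

lemma wZeta_neg (z : ℂ) : wZeta L.ω₁ L.ω₂ (-z) = -wZeta L.ω₁ L.ω₂ z := by
  have hderiv : deriv (wSigma L.ω₁ L.ω₂) (-z) = deriv (wSigma L.ω₁ L.ω₂) z := by
    have h := deriv_comp_neg (wSigma L.ω₁ L.ω₂) z
    rw [funext (wSigma_neg L)] at h
    simpa using h.symm
  rw [wZeta, wZeta, hderiv, wSigma_neg, div_neg]

variable {L} in
lemma wZeta_eq_logDeriv_sigmaProduct_add_inv {z : ℂ} (hz : z ∉ L.lattice) :
    wZeta L.ω₁ L.ω₂ z = logDeriv (sigmaProduct L) z + 1 / z := by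
  have hz0 : z ≠ 0 := (ne_of_mem_of_not_mem L.lattice.zero_mem hz).symm
  have h := logDeriv_mul z hz0 (sigmaProduct_ne_zero_iff.mpr fun h ↦ absurd h hz)
    differentiableAt_id (differentiable_sigmaProduct L z)
  rw [wZeta_eq_logDeriv, funext (wSigma_eq_mul_sigmaProduct L), add_comm, ← logDeriv_id]
  exact h

variable {L} in
lemma hasDerivAt_wZeta {z : ℂ} (hz : z ∉ L.lattice) :
    HasDerivAt (wZeta L.ω₁ L.ω₂) (-L.weierstrassP z) z := by
  have hz0 : z ≠ 0 := (ne_of_mem_of_not_mem L.lattice.zero_mem hz).symm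
  have heq : wZeta L.ω₁ L.ω₂ =ᶠ[𝓝 z] fun w ↦ logDeriv (sigmaProduct L) w + w⁻¹ := by
    filter_upwards [L.isClosed_lattice.isOpen_compl.mem_nhds hz] with w hw
    rw [wZeta_eq_logDeriv_sigmaProduct_add_inv hw, one_div]
  refine HasDerivAt.congr_of_eventuallyEq ?_ heq
  convert! (hasDerivAt_logDeriv_sigmaProduct fun h ↦ absurd h hz).add (hasDerivAt_inv hz0) using 1
  have hP : L.weierstrassPExcept 0 z + 1 / z ^ 2 = L.weierstrassP z := by
    simpa using L.weierstrassPExcept_add 0 z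
  rw [← hP]
  ring

lemma isPreconnected_compl_lattice : IsPreconnected (L.lattice : Set ℂ)ᶜ := by
  have hcountable : (L.lattice : Set ℂ).Countable :=
    Set.countable_coe_iff.mp (L.latticeEquivProd.toEquiv.countable_iff.mpr inferInstance)
  have hrank : 1 < Module.rank ℝ ℂ := by
    rw [rank_real_complex]
    exact Cardinal.one_lt_two
  exact (hcountable.isPathConnected_compl_of_one_lt_rank hrank).isConnected.isPreconnected

variable {L} in
lemma add_lattice_mem_iff {z : ℂ} (ω : L.lattice) : z + ω ∈ L.lattice ↔ z ∈ L.lattice :=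
  Submodule.add_mem_iff_left _ ω.2

variable {L} in
lemma wZeta_add_lattice_sub_wZeta_eq (ω : L.lattice) {z w : ℂ} (hz : z ∉ L.lattice)
    (hw : w ∉ L.lattice) :
    wZeta L.ω₁ L.ω₂ (z + ω) - wZeta L.ω₁ L.ω₂ z = wZeta L.ω₁ L.ω₂ (w + ω) - wZeta L.ω₁ L.ω₂ w := by
  have hderiv (u : ℂ) (hu : u ∈ (L.lattice : Set ℂ)ᶜ) :
      HasDerivAt (fun u ↦ wZeta L.ω₁ L.ω₂ (u + ω) - wZeta L.ω₁ L.ω₂ u) 0 u := by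
    have hu' : u + ω ∉ L.lattice := mt (add_lattice_mem_iff ω).mp hu
    convert! ((hasDerivAt_wZeta hu').comp_add_const u ω).sub (hasDerivAt_wZeta hu) using 1
    rw [L.weierstrassP_add_coe, sub_self]
  exact L.isClosed_lattice.isOpen_compl.is_const_of_deriv_eq_zero (isPreconnected_compl_lattice L)
    (fun u hu ↦ (hderiv u hu).differentiableAt.differentiableWithinAt)
    (fun u hu ↦ (hderiv u hu).deriv) hz hw

/-- The quasi-period homomorphism `η` of the zeta function, `ζ(z + ω) = ζ(z) + η(ω)`. It is
evaluated at the base point `ω₁ / 2`, which is not a pole of `ζ`. -/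
noncomputable def quasiPeriod : L.lattice →+ ℂ :=
  AddMonoidHom.mk' (fun ω ↦ wZeta L.ω₁ L.ω₂ (L.ω₁ / 2 + ω) - wZeta L.ω₁ L.ω₂ (L.ω₁ / 2))
    fun ω ω' ↦ by
      have h := wZeta_add_lattice_sub_wZeta_eq ω'
        (mt (add_lattice_mem_iff ω).mp L.ω₁_div_two_notMem_lattice) L.ω₁_div_two_notMem_lattice
      rw [Submodule.coe_add, ← add_assoc]
      linear_combination h

variable {L}

lemma wZeta_add_lattice (ω : L.lattice) {z : ℂ} (hz : z ∉ L.lattice) :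
    wZeta L.ω₁ L.ω₂ (z + ω) = wZeta L.ω₁ L.ω₂ z + quasiPeriod L ω :=
  eq_add_of_sub_eq' (wZeta_add_lattice_sub_wZeta_eq ω hz L.ω₁_div_two_notMem_lattice)

lemma quasiPeriod_eq_two_mul_wZeta {ω : L.lattice} (hω : (ω : ℂ) / 2 ∉ L.lattice) :
    quasiPeriod L ω = 2 * wZeta L.ω₁ L.ω₂ (ω / 2) := by
  have h := wZeta_add_lattice ω (mt neg_mem_iff.mp hω)
  rw [neg_add_eq_sub, sub_half, wZeta_neg] at h
  linear_combination -h

lemma exists_wSigma_add_lattice_eq (ω : L.lattice) : ∃ c : ℂ, ∀ z,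
    wSigma L.ω₁ L.ω₂ (z + ω) = c * (exp (quasiPeriod L ω * (z + ω / 2)) * wSigma L.ω₁ L.ω₂ z) := by
  set E : ℂ → ℂ := fun z ↦ exp (quasiPeriod L ω * (z + ω / 2))
  have hE (z : ℂ) : HasDerivAt E (E z * quasiPeriod L ω) z := by
    simpa only [mul_one] using
      (((hasDerivAt_id' z).add_const (ω / 2 : ℂ)).const_mul (quasiPeriod L ω)).cexp
  have hEd : Differentiable ℂ E := fun z ↦ (hE z).differentiableAt
  have hE0 (z : ℂ) : E z ≠ 0 := exp_ne_zero _
  have hσ := differentiable_wSigma L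
  have hσ0 {z : ℂ} (hz : z ∈ (L.lattice : Set ℂ)ᶜ) : wSigma L.ω₁ L.ω₂ z ≠ 0 :=
    mt wSigma_eq_zero_iff.mp hz
  have hlogDeriv : Set.EqOn (logDeriv fun z ↦ wSigma L.ω₁ L.ω₂ (z + ω))
      (logDeriv fun z ↦ E z * wSigma L.ω₁ L.ω₂ z) (L.lattice : Set ℂ)ᶜ := by
    intro z hz
    calc logDeriv (fun z ↦ wSigma L.ω₁ L.ω₂ (z + ω)) z = wZeta L.ω₁ L.ω₂ (z + ω) := by
          rw [logDeriv_apply, deriv_comp_add_const, wZeta]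
      _ = quasiPeriod L ω + wZeta L.ω₁ L.ω₂ z := by rw [wZeta_add_lattice ω hz, add_comm]
      _ = logDeriv E z + logDeriv (wSigma L.ω₁ L.ω₂) z := by
          rw [logDeriv_apply E, (hE z).deriv, mul_div_cancel_left₀ _ (hE0 z), wZeta_eq_logDeriv]
      _ = logDeriv (fun z ↦ E z * wSigma L.ω₁ L.ω₂ z) z :=
          (logDeriv_mul z (hE0 z) (hσ0 hz) (hEd z) (hσ z)).symm
  obtain ⟨c, -, hc⟩ := (logDeriv_eqOn_iff (by fun_prop) (by fun_prop)
    L.isClosed_lattice.isOpen_compl (isPreconnected_compl_lattice L)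
    (fun z hz ↦ mul_ne_zero (hE0 z) (hσ0 hz))
    fun z hz ↦ hσ0 (mt (add_lattice_mem_iff ω).mp hz)).mp hlogDeriv
  refine ⟨c, fun z ↦ ?_⟩
  by_cases hz : z ∈ L.lattice
  · rw [wSigma_eq_zero_iff.mpr hz, wSigma_eq_zero_iff.mpr ((add_lattice_mem_iff ω).mpr hz),
      mul_zero, mul_zero]
  · exact hc hz

lemma wSigma_add_lattice {ω : L.lattice} (hω : (ω : ℂ) / 2 ∉ L.lattice) (z : ℂ) :
    wSigma L.ω₁ L.ω₂ (z + ω) =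
      -exp (quasiPeriod L ω * (z + ω / 2)) * wSigma L.ω₁ L.ω₂ z := by
  obtain ⟨c, hc⟩ := exists_wSigma_add_lattice_eq ω
  have hc_neg_one : c = -1 := by
    have h := hc (-(ω / 2))
    rw [neg_add_eq_sub, sub_half, neg_add_cancel, mul_zero, exp_zero, one_mul, wSigma_neg,
      mul_neg, ← neg_mul] at h
    have hσ0 : wSigma L.ω₁ L.ω₂ (ω / 2) ≠ 0 := mt wSigma_eq_zero_iff.mp hω
    exact neg_eq_iff_eq_neg.mp (mul_right_cancel₀ hσ0 (h.symm.trans (one_mul _).symm))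
  rw [hc, hc_neg_one]
  ring

end SigmaZeta

section LegendreRelation

open Complex

variable {L : PeriodPair}

/-- The open period parallelogram with sides `2ω₁` and `2ω₂` centred at the origin. -/
def periodCell (L : PeriodPair) : Set ℂ :=
  L.basis.equivFun ⁻¹' Metric.ball 0 1

lemma isOpen_periodCell (L : PeriodPair) : IsOpen (periodCell L) :=
  Metric.isOpen_ball.preimage (LinearMap.continuous_of_finiteDimensional
    (L.basis.equivFun : ℂ →ₗ[ℝ] Fin 2 → ℝ))

lemma convex_periodCell (L : PeriodPair) : Convex ℝ (periodCell L) :=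
  (convex_ball 0 1).linear_preimage (L.basis.equivFun : ℂ →ₗ[ℝ] Fin 2 → ℝ)

lemma mul_add_mul_mem_periodCell_iff {x y : ℝ} :
    (x * L.ω₁ + y * L.ω₂ : ℂ) ∈ periodCell L ↔ |x| < 1 ∧ |y| < 1 := by
  have hcoord : L.basis.equivFun (x * L.ω₁ + y * L.ω₂ : ℂ) = ![x, y] := by
    rw [← LinearEquiv.eq_symm_apply]
    simp [Module.Basis.equivFun_symm_apply]
  rw [periodCell, Set.mem_preimage, hcoord, mem_ball_zero_iff, pi_norm_lt_iff one_pos]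
  simp [Fin.forall_fin_two]

lemma eq_zero_of_mem_periodCell_of_mem_lattice {z : ℂ} (hz : z ∈ periodCell L)
    (hzL : z ∈ L.lattice) : z = 0 := by
  obtain ⟨m, n, rfl⟩ := PeriodPair.mem_lattice.mp hzL
  have h := (mul_add_mul_mem_periodCell_iff (L := L) (x := m) (y := n)).mp (by exact_mod_cast hz)
  have hm : m = 0 := Int.abs_lt_one_iff.mp (by exact_mod_cast h.1)
  have hn : n = 0 := Int.abs_lt_one_iff.mp (by exact_mod_cast h.2)
  simp [hm, hn]

lemma notMem_lattice_of_eq_mul_add_mul {x y : ℝ} {z : ℂ} (hz : z = x * L.ω₁ + y * L.ω₂)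
    (hx : |x| < 1) (hy : |y| < 1) (hxy : x = 0 → y ≠ 0) : z ∉ L.lattice := by
  intro hzL
  have hzero := eq_zero_of_mem_periodCell_of_mem_lattice
    (hz ▸ mul_add_mul_mem_periodCell_iff.mpr ⟨hx, hy⟩) hzL
  rw [hz] at hzero
  obtain ⟨hx0, hy0⟩ := LinearIndependent.pair_iff.mp L.indep x y (by simpa using hzero)
  exact hxy hx0 hy0

lemma exists_hasDerivAt_add_log_wZeta (L : PeriodPair) : ∃ P : ℂ → ℂ, ∀ κ : ℂ,
    ∀ z ∈ periodCell L, κ * z ∈ slitPlane →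
      HasDerivAt (fun w ↦ P w + log (κ * w)) (wZeta L.ω₁ L.ω₂ z) z := by
  have hdiff : DifferentiableOn ℂ (logDeriv (sigmaProduct L)) (periodCell L) := fun z hz ↦
    (hasDerivAt_logDeriv_sigmaProduct
      (eq_zero_of_mem_periodCell_of_mem_lattice hz)).differentiableAt.differentiableWithinAt
  obtain ⟨P, hP⟩ := (convex_periodCell L).exists_forall_hasDerivWithinAt hdiff
  refine ⟨P, fun κ z hz hκ ↦ ?_⟩
  obtain ⟨hκ0, hz0⟩ := mul_ne_zero_iff.mp (slitPlane_ne_zero hκ)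
  have hzL : z ∉ L.lattice := mt (eq_zero_of_mem_periodCell_of_mem_lattice hz) hz0
  have hlog := ((hasDerivAt_id' z).const_mul κ).clog hκ
  rw [mul_div_mul_left _ _ hκ0] at hlog
  rw [wZeta_eq_logDeriv_sigmaProduct_add_inv hzL]
  exact ((hP z hz).hasDerivAt ((isOpen_periodCell L).mem_nhds hz)).add hlog

lemma inv_mul_mem_slitPlane {ω₁ ω₂ : ℂ} (hω : (ω₂ / ω₁).im ≠ 0) {x y : ℝ}
    (hxy : y = 0 → 0 < x) : ω₁⁻¹ * (x * ω₁ + y * ω₂) ∈ slitPlane := by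
  have hω₁ : ω₁ ≠ 0 := by
    rintro rfl
    simp at hω
  have hdiv : ω₁⁻¹ * (x * ω₁ + y * ω₂) = x + y * (ω₂ / ω₁) := by field_simp
  rw [hdiv, mem_slitPlane_iff]
  rcases eq_or_ne y 0 with hy | hy
  · simpa [hy] using hxy hy
  · simp [hy, hω]

/-- `F` and `G` differ in the choice of the logarithm: the slit of `F` is the ray `-ω₁ℝ≥0`, that
of `G` the ray `ω₁ℝ≥0`. -/
lemma exists_primitives_wZeta (hL : (L.ω₂ / L.ω₁).im ≠ 0) : ∃ F G : ℂ → ℂ,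
    (∀ z, G z - F z = log (-(L.ω₁⁻¹ * z)) - log (L.ω₁⁻¹ * z)) ∧
    (∀ {x y : ℝ} {z : ℂ}, z = x * L.ω₁ + y * L.ω₂ → |x| < 1 → |y| < 1 → (y = 0 → 0 < x) →
      HasDerivAt F (wZeta L.ω₁ L.ω₂ z) z) ∧
    ∀ {x y : ℝ} {z : ℂ}, z = x * L.ω₁ + y * L.ω₂ → |x| < 1 → |y| < 1 → (y = 0 → x < 0) →
      HasDerivAt G (wZeta L.ω₁ L.ω₂ z) z := by
  obtain ⟨P, hP⟩ := exists_hasDerivAt_add_log_wZeta L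
  refine ⟨fun z ↦ P z + log (L.ω₁⁻¹ * z), fun z ↦ P z + log (-L.ω₁⁻¹ * z), fun z ↦ ?_, ?_, ?_⟩
  · simp only [neg_mul]
    ring
  · rintro x y _ rfl hx hy hxy
    exact hP _ _ (mul_add_mul_mem_periodCell_iff.mpr ⟨hx, hy⟩) (inv_mul_mem_slitPlane hL hxy)
  · rintro x y _ rfl hx hy hxy
    refine hP _ _ (mul_add_mul_mem_periodCell_iff.mpr ⟨hx, hy⟩) ?_
    convert! inv_mul_mem_slitPlane hL (x := -x) (y := -y) (by simpa using hxy) using 1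
    push_cast
    ring

/-- Integration of `ζ` along the two sides `[-u/2, u/2] ± ω/2` of a parallelogram. -/
lemma quasiPeriod_mul_eq {ω : L.lattice} {u : ℂ} {F G : ℂ → ℂ}
    (hF : ∀ t : ℝ, |t| ≤ 1 / 2 → HasDerivAt F (wZeta L.ω₁ L.ω₂ (t * u + ω / 2)) (t * u + ω / 2))
    (hG : ∀ t : ℝ, |t| ≤ 1 / 2 → HasDerivAt G (wZeta L.ω₁ L.ω₂ (t * u - ω / 2)) (t * u - ω / 2))
    (hu : ∀ t : ℝ, |t| ≤ 1 / 2 → t * u - ω / 2 ∉ L.lattice) :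
    quasiPeriod L ω * u =
      F ((u + ω) / 2) - G ((u - ω) / 2) - (F ((ω - u) / 2) - G (-(u + ω) / 2)) := by
  have hderiv (t : ℝ) (ht : t ∈ Set.uIcc (-1 / 2 : ℝ) (1 / 2)) :
      HasDerivAt (fun t : ℝ ↦ F (t * u + ω / 2) - G (t * u - ω / 2)) (quasiPeriod L ω * u) t := by
    rw [Set.uIcc_of_le (by norm_num)] at ht
    have ht' : |t| ≤ 1 / 2 := abs_le.mpr ⟨by linarith [ht.1], ht.2⟩
    have hline : HasDerivAt (fun t : ℝ ↦ (t : ℂ) * u) u t := by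
      simpa using! (hasDerivAt_id' t).ofReal_comp.mul_const u
    have hζ := wZeta_add_lattice ω (hu t ht')
    rw [sub_add_eq_add_sub, add_sub_assoc, sub_half] at hζ
    convert! ((hF t ht').comp t (hline.add_const (ω / 2 : ℂ))).sub
      ((hG t ht').comp t (hline.sub_const (ω / 2 : ℂ))) using 1
    rw [hζ]
    ring
  have h := intervalIntegral.integral_eq_sub_of_hasDerivAt hderiv (by simp)
  rw [intervalIntegral.integral_const] at h
  convert! h using 1
  · norm_num
  · congr! 3
    all_goals push_cast; ring

lemma log_neg_of_im_neg {w : ℂ} (hw : w.im < 0) : log (-w) = log w + Real.pi * I := by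
  have harg : arg w = arg (-w) - Real.pi := by
    simpa using arg_neg_eq_arg_sub_pi_of_im_pos (x := -w) (by simpa using hw)
  rw [log, log, norm_neg, harg]
  push_cast
  ring

theorem legendre_relation (hL : 0 < (L.ω₂ / L.ω₁).im) :
    quasiPeriod L (L.latticeBasis 0) * L.ω₂ - quasiPeriod L (L.latticeBasis 1) * L.ω₁ =
      2 * Real.pi * I := by
  obtain ⟨F, G, hGF, hF, hG⟩ := exists_primitives_wZeta hL.ne'
  have hhalf : |(1 / 2 : ℝ)| < 1 := by norm_num [abs_of_pos]
  have hhalf' : |(-1 / 2 : ℝ)| < 1 := by norm_num [abs_of_neg]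
  have hb₀ := L.latticeBasis_zero
  have hb₁ := L.latticeBasis_one
  have hhorizontal : quasiPeriod L (L.latticeBasis 1) * L.ω₁ =
      F ((L.ω₁ + L.ω₂) / 2) - F ((L.ω₁ - L.ω₂) / 2) -
        (F ((L.ω₂ - L.ω₁) / 2) - F (-(L.ω₁ + L.ω₂) / 2)) := by
    rw [← hb₁]
    refine quasiPeriod_mul_eq (fun t ht ↦ hF (x := t) (y := 1 / 2) ?_ (by linarith) hhalf (by simp))
      (fun t ht ↦ hF (x := t) (y := -1 / 2) ?_ (by linarith) hhalf' (by simp)) fun t ht ↦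
      notMem_lattice_of_eq_mul_add_mul (x := t) (y := -1 / 2) ?_ (by linarith) hhalf' (by simp)
    all_goals push_cast [hb₁]; ring
  have hvertical : quasiPeriod L (L.latticeBasis 0) * L.ω₂ =
      F ((L.ω₂ + L.ω₁) / 2) - G ((L.ω₂ - L.ω₁) / 2) -
        (F ((L.ω₁ - L.ω₂) / 2) - G (-(L.ω₂ + L.ω₁) / 2)) := by
    rw [← hb₀]
    refine quasiPeriod_mul_eq (fun t ht ↦ hF (x := 1 / 2) (y := t) ?_ hhalf (by linarith) (by simp))
      (fun t ht ↦ hG (x := -1 / 2) (y := t) ?_ hhalf' (by linarith) (by norm_num)) fun t ht ↦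
      notMem_lattice_of_eq_mul_add_mul (x := -1 / 2) (y := t) ?_ hhalf' (by linarith) (by simp)
    all_goals push_cast [hb₀]; ring
  rw [add_comm L.ω₁ L.ω₂] at hhorizontal
  have him : -(L.ω₂ / L.ω₁).im / 2 < 0 := by linarith
  have hω₁ : L.ω₁ ≠ 0 := L.indep.ne_zero 0
  have hlower : G (-(L.ω₂ + L.ω₁) / 2) - F (-(L.ω₂ + L.ω₁) / 2) = Real.pi * I := by
    have hw : L.ω₁⁻¹ * (-(L.ω₂ + L.ω₁) / 2) = -(L.ω₂ / L.ω₁ + 1) / 2 := by field_simp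
    rw [hGF, hw, log_neg_of_im_neg, add_sub_cancel_left]
    simpa using him
  have hupper : G ((L.ω₂ - L.ω₁) / 2) - F ((L.ω₂ - L.ω₁) / 2) = -(Real.pi * I) := by
    have hw : L.ω₁⁻¹ * ((L.ω₂ - L.ω₁) / 2) = -((1 - L.ω₂ / L.ω₁) / 2) := by
      field_simp
      ring
    rw [hGF, hw, neg_neg, log_neg_of_im_neg, sub_add_cancel_left]
    simpa using him
  linear_combination hvertical - hhorizontal + hlower - hupper

end LegendreRelation

section Pseudopolynomial

open Complex ComplexConjugate

variable {L : PeriodPair}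

lemma quasiPeriod_eq_conj_sub_bconst_mul (h1 : L.ω₁.im = 0)
    (harea : L.ω₁.re * L.ω₂.im = Real.pi / 2) (ω : L.lattice) :
    quasiPeriod L ω = 2 * (conj (ω : ℂ) - bconst L.ω₁ L.ω₂ * ω) := by
  have hω₁ : L.ω₁ ≠ 0 := L.indep.ne_zero 0
  have hconj₁ : conj L.ω₁ = L.ω₁ := conj_eq_iff_im.mpr h1
  have hconj₂ : conj L.ω₂ = L.ω₂ - 2 * L.ω₂.im * I := by
    have h := sub_conj L.ω₂
    push_cast at h
    linear_combination -h
  have harea' : L.ω₁ * L.ω₂.im = Real.pi / 2 := by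
    rw [← conj_eq_iff_re.mp hconj₁]
    exact_mod_cast harea
  have hL : 0 < (L.ω₂ / L.ω₁).im := by
    have him : (L.ω₂ / L.ω₁).im = Real.pi / 2 / normSq L.ω₁ := by
      rw [div_im, h1, ← harea]
      ring
    have := normSq_pos.mpr hω₁
    rw [him]
    positivity
  have hquasiPeriod₁ : quasiPeriod L (L.latticeBasis 0) =
      2 * (conj L.ω₁ - bconst L.ω₁ L.ω₂ * L.ω₁) := by
    rw [quasiPeriod_eq_two_mul_wZeta (by simpa using L.ω₁_div_two_notMem_lattice),
      L.latticeBasis_zero, hconj₁, bconst, lambda1]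
    field_simp
    ring
  have hquasiPeriod₂ : quasiPeriod L (L.latticeBasis 1) =
      2 * (conj L.ω₂ - bconst L.ω₁ L.ω₂ * L.ω₂) := by
    rw [hconj₁] at hquasiPeriod₁
    rw [hconj₂]
    apply mul_left_cancel₀ hω₁
    linear_combination L.ω₂ * hquasiPeriod₁ - legendre_relation hL + 4 * I * harea'
  rw [← L.latticeBasis.sum_repr ω, Fin.sum_univ_two, map_add, map_zsmul, map_zsmul,
    hquasiPeriod₁, hquasiPeriod₂]
  simp only [zsmul_eq_mul, Submodule.coe_add, SetLike.val_smul, L.latticeBasis_zero,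
    L.latticeBasis_one, map_add, map_mul, map_intCast]
  ring

lemma sigmaStar_add_lattice (h1 : L.ω₁.im = 0) (harea : L.ω₁.re * L.ω₂.im = Real.pi / 2)
    {ω : L.lattice} (hω : (ω : ℂ) / 2 ∉ L.lattice) (u : ℂ) :
    sigmaStar L.ω₁ L.ω₂ (u + ω) =
      -exp (2 * conj (ω : ℂ) * (u + ω / 2)) * sigmaStar L.ω₁ L.ω₂ u := by
  have hexp : exp (bconst L.ω₁ L.ω₂ * (u + ω) ^ 2) * exp (quasiPeriod L ω * (u + ω / 2)) =
      exp (2 * conj (ω : ℂ) * (u + ω / 2)) * exp (bconst L.ω₁ L.ω₂ * u ^ 2) := by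
    rw [← exp_add, ← exp_add, quasiPeriod_eq_conj_sub_bconst_mul h1 harea]
    ring_nf
  rw [sigmaStar, sigmaStar, wSigma_add_lattice hω]
  linear_combination -wSigma L.ω₁ L.ω₂ u * hexp

lemma two_mul_conj_mul_add_half_eq (ω u : ℂ) :
    2 * conj ω * (u + ω / 2) =
      2 * I * (conj ω * u).im + ((‖u + ω‖ ^ 2 : ℝ) - (‖u‖ ^ 2 : ℝ)) := by
  simp only [← normSq_eq_norm_sq, normSq_apply]
  apply Complex.ext <;> simp <;> ring

lemma exp_neg_norm_sq_mul_sigmaStar_add_lattice (h1 : L.ω₁.im = 0)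
    (harea : L.ω₁.re * L.ω₂.im = Real.pi / 2) {ω : L.lattice} (hω : (ω : ℂ) / 2 ∉ L.lattice)
    (u : ℂ) :
    exp (-(‖u + ω‖ ^ 2 : ℝ)) * sigmaStar L.ω₁ L.ω₂ (u + ω) =
      -exp (2 * I * (conj (ω : ℂ) * u).im) *
        (exp (-(‖u‖ ^ 2 : ℝ)) * sigmaStar L.ω₁ L.ω₂ u) := by
  have hexp : exp (-(‖u + ω‖ ^ 2 : ℝ)) * exp (2 * conj (ω : ℂ) * (u + ω / 2)) =
      exp (2 * I * (conj (ω : ℂ) * u).im) * exp (-(‖u‖ ^ 2 : ℝ)) := by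
    rw [← exp_add, ← exp_add, two_mul_conj_mul_add_half_eq]
    ring_nf
  rw [sigmaStar_add_lattice h1 harea hω]
  linear_combination -sigmaStar L.ω₁ L.ω₂ u * hexp

theorem pseudoPoly_add_lattice (h1 : L.ω₁.im = 0) (harea : L.ω₁.re * L.ω₂.im = Real.pi / 2)
    {ω : L.lattice} (hω : (ω : ℂ) / 2 ∉ L.lattice) (α z : ℂ) :
    pseudoPoly L.ω₁ L.ω₂ α (z + ω) =
      -exp (2 * I * (conj (ω : ℂ) * (z - 2 * α)).im) * pseudoPoly L.ω₁ L.ω₂ α z := by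
  have hexp : exp (2 * I * (conj α * (z + ω)).im) * exp (2 * I * (conj (ω : ℂ) * (z - α)).im) =
      exp (2 * I * (conj (ω : ℂ) * (z - 2 * α)).im) * exp (2 * I * (conj α * z).im) := by
    rw [← exp_add, ← exp_add, ← mul_add, ← mul_add, ← ofReal_add, ← ofReal_add]
    congr 3
    simp only [mul_im, conj_re, add_im, conj_im, add_re, sub_im, sub_re, re_ofNat, im_ofNat,
      mul_re]
    ring
  rw [pseudoPoly, pseudoPoly, add_sub_right_comm,
    exp_neg_norm_sq_mul_sigmaStar_add_lattice h1 harea hω]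
  linear_combination -(exp (-(‖z - α‖ ^ 2 : ℝ)) * sigmaStar L.ω₁ L.ω₂ (z - α)) * hexp

theorem pseudoPoly_add_lattice_left (h1 : L.ω₁.im = 0)
    (harea : L.ω₁.re * L.ω₂.im = Real.pi / 2)
    {ω : L.lattice} (hω : (ω : ℂ) / 2 ∉ L.lattice) (α z : ℂ) :
    pseudoPoly L.ω₁ L.ω₂ (α + ω) z =
      -exp (2 * I * (conj (ω : ℂ) * α).im) * pseudoPoly L.ω₁ L.ω₂ α z := by
  have hexp : exp (2 * I * (conj (α + ω) * z).im) =
      exp (2 * I * (conj (ω : ℂ) * α).im) * exp (2 * I * (conj α * z).im) *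
        exp (2 * I * (conj (ω : ℂ) * (z - (α + ω))).im) := by
    rw [← exp_add, ← exp_add, ← mul_add, ← mul_add, ← ofReal_add, ← ofReal_add]
    congr 3
    simp only [map_add, mul_im, add_re, conj_re, add_im, conj_im, sub_im, sub_re]
    ring
  have hsub : z - α = z - (α + ω) + ω := by ring
  rw [pseudoPoly, pseudoPoly, hsub, exp_neg_norm_sq_mul_sigmaStar_add_lattice h1 harea hω, hexp]
  ring

theorem pseudoPoly_periodicity_general (h1 : L.ω₁.im = 0)
    (harea : L.ω₁.re * L.ω₂.im = Real.pi / 2) {ω : ℂ} (hω : ω ∈ L.lattice)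
    (hω2 : ω / 2 ∉ L.lattice) (α z : ℂ) :
    pseudoPoly L.ω₁ L.ω₂ (α + ω) z =
        -exp (2 * I * (conj ω * α).im) * pseudoPoly L.ω₁ L.ω₂ α z ∧
      pseudoPoly L.ω₁ L.ω₂ α (z + ω) =
        -exp (2 * I * (conj ω * (z - 2 * α)).im) * pseudoPoly L.ω₁ L.ω₂ α z :=
  ⟨pseudoPoly_add_lattice_left (ω := ⟨ω, hω⟩) h1 harea hω2 α z,
    pseudoPoly_add_lattice (ω := ⟨ω, hω⟩) h1 harea hω2 α z⟩

lemma linearIndependent_pair_of_det_ne_zero {a b : ℂ} (hab : a.re * b.im - a.im * b.re ≠ 0) :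
    LinearIndependent ℝ ![a, b] := by
  rw [LinearIndependent.pair_iff]
  intro s t hst
  have hre : s * a.re + t * b.re = 0 := by simpa using congr(($hst).re)
  have him : s * a.im + t * b.im = 0 := by simpa using congr(($hst).im)
  constructor
  · refine (mul_eq_zero.mp ?_).resolve_right hab
    linear_combination b.im * hre - b.re * him
  · refine (mul_eq_zero.mp ?_).resolve_right hab
    linear_combination a.re * him - a.im * hre

end Pseudopolynomial

/-- periodicity-type properties of the monic first degree
pseudopolynomials on the torus. -/
theorem pseudoPoly_periodicity (ω₁ ω₂ : ℂ)
    (h1 : ω₁.im = 0) (h1' : 0 < ω₁.re) (h2 : 0 < ω₂.im)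
    (harea : ω₁.re * ω₂.im = Real.pi / 2) :
    ∀ ω ∈ ({ω₁, ω₂} : Set ℂ), ∀ α z : ℂ,
      pseudoPoly ω₁ ω₂ (α + ω) z =
        -Complex.exp (2 * Complex.I * ((((starRingEnd ℂ) ω) * α).im : ℂ)) *
          pseudoPoly ω₁ ω₂ α z ∧
      pseudoPoly ω₁ ω₂ α (z + ω) =
        -Complex.exp (2 * Complex.I * ((((starRingEnd ℂ) ω) * (z - 2 * α)).im : ℂ)) *
          pseudoPoly ω₁ ω₂ α z := by
  have hind : LinearIndependent ℝ ![ω₁, ω₂] :=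
    linearIndependent_pair_of_det_ne_zero (by simp [h1, h1'.ne', h2.ne'])
  rintro ω (rfl | rfl)
  · exact pseudoPoly_periodicity_general (L := ⟨ω, ω₂, hind⟩) h1 harea
      (PeriodPair.ω₁_mem_lattice _) (PeriodPair.ω₁_div_two_notMem_lattice _)
  · exact pseudoPoly_periodicity_general (L := ⟨ω₁, ω, hind⟩) h1 harea
      (PeriodPair.ω₂_mem_lattice _) (PeriodPair.ω₂_div_two_notMem_lattice _)
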